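/- For every finite string W over the alphabet {A, X, B}, the open values in the tight puzzle satisfy |W| = |W̄|, where W̄ denotes the reversed string. (Equivalently: for every open sentence S, a bi-infinite string in {A, X, B} with finitely many non-X letters considered up to shift, |S| = |S̄|.) -/

import Mathlib

/-!
The "tight puzzle" of Schwartz–Tabachnikov.  Strings over the alphabet `{A, X, B}`;
word list (coefficient, weight): `X (1,0)`, `XA (1,1)`, `XAA (1,1)`, `AXA (2,1)`,
`AAA (-1,1)`, `BA (-1,1)`, `ABA (-1,1)`, `XXA (-1,1)`; in a parsing the word `X` may
never be immediately followed by the word `XA` or the word `BA`.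
-/

open scoped Classical

/-- The three-letter alphabet. -/
inductive PLetter | A | X | B
deriving DecidableEq

/-- Strings over the alphabet. -/
abbrev PWord := List PLetter

/-- The tight puzzle word list. -/
def tightWords : List PWord :=
  [[PLetter.X], [PLetter.X, PLetter.A], [PLetter.X, PLetter.A, PLetter.A],
   [PLetter.A, PLetter.X, PLetter.A], [PLetter.A, PLetter.A, PLetter.A],
   [PLetter.B, PLetter.A], [PLetter.A, PLetter.B, PLetter.A],
   [PLetter.X, PLetter.X, PLetter.A]]

/-- Coefficients of the words of the tight puzzle (`AXA ↦ 2`; `AAA, BA, ABA, XXA ↦ -1`;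
`X, XA, XAA ↦ 1`). -/
def tightCoeff (w : PWord) : ℤ :=
  if w = [PLetter.A, PLetter.X, PLetter.A] then 2
  else if w = [PLetter.A, PLetter.A, PLetter.A] ∨ w = [PLetter.B, PLetter.A] ∨
      w = [PLetter.A, PLetter.B, PLetter.A] ∨ w = [PLetter.X, PLetter.X, PLetter.A] then -1
  else 1

/-- Weights of the words: the word `X` has weight `0`, all other words weight `1`. -/
def wordWt (w : PWord) : ℕ := if w = [PLetter.X] then 0 else 1

/-- The forbidden adjacency: the word `X` immediately followed by `XA` or `BA`. -/
def Bad (u v : PWord) : Prop :=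
  u = [PLetter.X] ∧ (v = [PLetter.X, PLetter.A] ∨ v = [PLetter.B, PLetter.A])

/-- The contribution `coefficient · t^weight ∈ ℤ[t]` of a parsing `L`. -/
noncomputable def parseVal (c : PWord → ℤ) (L : List PWord) : Polynomial ℤ :=
  Polynomial.C ((L.map c).prod) * Polynomial.X ^ ((L.map wordWt).sum)

/-- `L` is a parsing in the tight puzzle: all its words are on the word list and the
forbidden adjacency never occurs. -/
def TightChain (L : List PWord) : Prop :=
  (∀ w ∈ L, w ∈ tightWords) ∧ List.Chain' (fun u v => ¬ Bad u v) L

/-- The *core* of a string: what remains after deleting all leading and trailing `X`s. -/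
def core (s : PWord) : PWord :=
  ((s.dropWhile (· == PLetter.X)).reverse.dropWhile (· == PLetter.X)).reverse

/-- `L` is a parsing of the bi-infinite string `⋯XX·W·XX⋯` (with the infinitely many
padding `X`s parsed as copies of the word `X` and trimmed away): the words of `L`
concatenate to `W` up to padding by `X`s on either side, `L` neither starts nor ends
with the word `X`, and (because of the padding `X`-words on the left) the first word
of `L` is not `XA` or `BA`. -/
def IsOpenParsing (W : PWord) (L : List PWord) : Prop :=
  TightChain L ∧ core L.flatten = core W ∧
  ∀ h : L ≠ [],
    L.head h ≠ [PLetter.X] ∧ L.head h ≠ [PLetter.X, PLetter.A] ∧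
    L.head h ≠ [PLetter.B, PLetter.A] ∧ L.getLast h ≠ [PLetter.X]

/-- `(r, L)` is a parsing of the cyclic string `(W)`: reading the necklace of the
letters of `W` starting at position `r`, the words of `L` concatenate to it, the
forbidden adjacency does not occur (cyclically), and `r < (last word).length`
(so that every parsing of the necklace is counted exactly once). -/
def IsCyclicParsing (W : PWord) (r : ℕ) (L : List PWord) : Prop :=
  TightChain L ∧
  ∃ h : L ≠ [], L.flatten = W.rotate r ∧ r < (L.getLast h).length ∧
    ¬ Bad (L.getLast h) (L.head h)

/-- `L` is a parsing of the locked string `[W]`: the words of `L` concatenate exactly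
to `W`, no padding allowed. -/
def IsLockedParsing (W : PWord) (L : List PWord) : Prop :=
  TightChain L ∧ L.flatten = W

/-- The nine words of both puzzles, as a function (used to enumerate parsings). -/
def wordOf : Fin 9 → PWord :=
  ![[PLetter.X], [PLetter.X, PLetter.A], [PLetter.X, PLetter.A, PLetter.A],
    [PLetter.X, PLetter.B, PLetter.A], [PLetter.A, PLetter.X, PLetter.A],
    [PLetter.A, PLetter.A, PLetter.A], [PLetter.B, PLetter.A],
    [PLetter.A, PLetter.B, PLetter.A], [PLetter.X, PLetter.X, PLetter.A]]

/-- The open value `|W| ∈ ℤ[t]`: the sum of `coefficient · t^weight` over all parsings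
of the bi-infinite string `⋯XX·W·XX⋯` (any such parsing consists of at most
`W.length + 2` words). -/
noncomputable def openVal (W : PWord) : Polynomial ℤ :=
  ∑ k ∈ Finset.range (W.length + 3), ∑ f : Fin k → Fin 9,
    if IsOpenParsing W ((List.ofFn f).map wordOf) then
      parseVal tightCoeff ((List.ofFn f).map wordOf)
    else 0

/-- The cyclic value `|(W)| ∈ ℤ[t]`: the sum of `coefficient · t^weight` over all
parsings of the cyclic string `(W)`. -/
noncomputable def cycVal (W : PWord) : Polynomial ℤ :=
  ∑ r ∈ Finset.range W.length, ∑ k ∈ Finset.range (W.length + 1), ∑ f : Fin k → Fin 9,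
    if IsCyclicParsing W r ((List.ofFn f).map wordOf) then
      parseVal tightCoeff ((List.ofFn f).map wordOf)
    else 0

/-- The locked value `|[W]| ∈ ℤ[t]`: the sum of `coefficient · t^weight` over all
parsings whose concatenation is exactly `W`. -/
noncomputable def lockVal (W : PWord) : Polynomial ℤ :=
  ∑ k ∈ Finset.range (W.length + 1), ∑ f : Fin k → Fin 9,
    if IsLockedParsing W ((List.ofFn f).map wordOf) then
      parseVal tightCoeff ((List.ofFn f).map wordOf)
    else 0

/-!
Conditioning on the first word of a parsing turns the weighted count of the parsings of a string
into a linear recursion.  Since the words `AAA`, `AXA`, `ABA` enter only through one linear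
combination, three numbers carry the recursion, so each letter acts by a `3 × 3` transfer matrix.
All three matrices are self-adjoint for one symmetric bilinear form `J`, and the open value of a
string is the `(0, 0)` entry of `J` times the product of its transfer matrices.  Reversing the
string replaces the product by its `J`-adjoint, which leaves that entry unchanged.
-/

theorem exists_eq_replicate_append_dropWhile {α : Type*} [BEq α] [LawfulBEq α] (a : α)
    (l : List α) : ∃ n, l = List.replicate n a ++ l.dropWhile (· == a) := by
  have htake : l.takeWhile (· == a) = List.replicate (l.takeWhile (· == a)).length a :=
    List.eq_replicate_of_mem fun x hx => by simpa using List.mem_takeWhile_imp hx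
  exact ⟨_, by rw [← htake, List.takeWhile_append_dropWhile]⟩

theorem getLast?_flatten_eq_getLast?_getLast {α : Type*} {L : List (List α)} (hL : L ≠ [])
    (h : L.getLast hL ≠ []) : L.flatten.getLast? = (L.getLast hL).getLast? := by
  have hflat : L.flatten ≠ [] := List.flatten_ne_nil_iff.mpr ⟨_, L.getLast_mem hL, h⟩
  rw [List.getLast?_eq_some_getLast h, List.getLast?_eq_some_getLast hflat,
    List.getLast_getLast_eq_getLast_flatten hL h]

theorem head_prefix_flatten {α : Type*} {L : List (List α)} (hL : L ≠ []) :
    L.head hL <+: L.flatten := by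
  obtain ⟨w, L, rfl⟩ := List.exists_cons_of_ne_nil hL
  exact List.prefix_append _ _
theorem sum_range_sum_ofFn_eq_finsum_mem {α M : Type*} [Fintype α] [AddCommMonoid M]
    (F : List α → M) (N : ℕ) :
    ∑ k ∈ Finset.range N, ∑ f : Fin k → α, F (List.ofFn f) =
      ∑ᶠ L ∈ {L : List α | L.length < N}, F L := by
  rw [Finset.sum_sigma', ← finsum_mem_coe_finset]
  refine finsum_mem_eq_of_bijOn List.equivSigmaTuple.symm ⟨?_, ?_, ?_⟩ fun _ _ => rfl
  · rintro ⟨k, f⟩ h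
    simpa [List.equivSigmaTuple] using h
  · exact List.equivSigmaTuple.symm.injective.injOn
  · intro L hL
    exact ⟨List.equivSigmaTuple L, by simpa [List.equivSigmaTuple] using hL,
      List.equivSigmaTuple.symm_apply_apply L⟩

section AdjointProducts

variable {α n R : Type*} [Fintype n] [DecidableEq n] [CommRing R] {J : Matrix n n R}

open Matrix in
theorem isAdjointPair_prod_map_reverse {T T' : α → Matrix n n R}
    (hT : ∀ a, J.IsAdjointPair J (T a) (T' a)) (s : List α) :
    J.IsAdjointPair J (s.map T).prod (s.reverse.map T').prod := by
  induction s with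
  | nil => simp [Matrix.IsAdjointPair]
  | cons a s ih =>
    calc ((a :: s).map T).prodᵀ * J = (s.map T).prodᵀ * ((T a)ᵀ * J) := by
          rw [List.map_cons, List.prod_cons, transpose_mul, Matrix.mul_assoc]
      _ = (s.map T).prodᵀ * J * T' a := by rw [(hT a : (T a)ᵀ * J = _), Matrix.mul_assoc]
      _ = J * ((s.reverse.map T').prod * T' a) := by
          rw [(ih : (s.map T).prodᵀ * J = _), Matrix.mul_assoc]
      _ = J * ((a :: s).reverse.map T').prod := by simp

open Matrix in
theorem prod_map_reverse_apply_self_eq {T : α → Matrix n n R} (hJ : J.IsSymm)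
    (hT : ∀ a, J.IsSelfAdjoint (T a)) (s : List α) (i : n) :
    (J * (s.reverse.map T).prod) i i = (J * (s.map T).prod) i i := by
  have hadj : (s.map T).prodᵀ * J = J * (s.reverse.map T).prod :=
    isAdjointPair_prod_map_reverse hT s
  calc (J * (s.reverse.map T).prod) i i = ((s.map T).prodᵀ * Jᵀ) i i := by rw [hJ, hadj]
    _ = (J * (s.map T).prod) i i := by rw [← transpose_mul, transpose_apply]

end AdjointProducts

/-- A word puzzle: a finite list of nonempty words, a relation saying which words may
immediately follow which, and the coefficient of each word.  A parsing of a string is weighted by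
the product of the coefficients of its words. -/
structure WordPuzzle (α R : Type*) where
  words : Finset (List α)
  nil_notMem : [] ∉ words
  CanFollow : List α → List α → Prop
  coeff : List α → R

namespace WordPuzzle

variable {α R : Type*} (P : WordPuzzle α R)

/-- `L` parses exactly the string `s`, and may be placed directly after the word `p`. -/
def IsParsing (p s : List α) (L : List (List α)) : Prop :=
  (∀ w ∈ L, w ∈ P.words) ∧ (p :: L).IsChain P.CanFollow ∧ L.flatten = s

/-- The total weight of the parsings of `s` that may be placed directly after the word `p`. -/
noncomputable def value [Semiring R] (p s : List α) : R :=
  ∑ᶠ L ∈ {L | P.IsParsing p s L}, (L.map P.coeff).prod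

variable {P}

theorem IsParsing.length_le {p s : List α} {L : List (List α)} (h : P.IsParsing p s L) :
    L.length ≤ s.length := by
  obtain ⟨hmem, -, rfl⟩ := h
  rw [List.length_flatten]
  refine (List.length_map (f := List.length) (as := L)).symm.trans_le
    (List.length_le_sum_of_one_le _ ?_)
  simp only [List.mem_map, forall_exists_index, and_imp, forall_apply_eq_imp_iff₂]
  exact fun w hw => List.length_pos_of_ne_nil fun h => P.nil_notMem (h ▸ hmem w hw)

variable (P)

theorem finite_setOf_isParsing (p s : List α) : {L | P.IsParsing p s L}.Finite := by
  have hfin : {L : List P.words | L.length ≤ s.length}.Finite := List.finite_length_le _ _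
  refine (hfin.image (List.map Subtype.val)).subset fun L hL => ?_
  lift L to List P.words using hL.1
  exact ⟨L, by simpa using hL.length_le, rfl⟩

variable {P}

theorem isParsing_nil {p s : List α} : P.IsParsing p s [] ↔ s = [] := by
  simp [IsParsing, eq_comm]

theorem isParsing_cons {p s w : List α} {L : List (List α)} :
    P.IsParsing p s (w :: L) ↔
      (w ∈ P.words ∧ P.CanFollow p w ∧ w <+: s) ∧ P.IsParsing w (s.drop w.length) L := by
  simp only [IsParsing, List.forall_mem_cons, List.isChain_cons_cons, List.flatten_cons]
  constructor
  · rintro ⟨⟨hw, hL⟩, ⟨hpw, hchain⟩, rfl⟩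
    exact ⟨⟨hw, hpw, List.prefix_append _ _⟩, hL, hchain, by simp⟩
  · rintro ⟨⟨hw, hpw, s', rfl⟩, hL, hchain, hflat⟩
    exact ⟨⟨hw, hL⟩, ⟨hpw, hchain⟩, by simpa using hflat⟩

variable (P) [Semiring R]

theorem value_congr {p q : List α} (h : ∀ w, P.CanFollow p w ↔ P.CanFollow q w) (s : List α) :
    P.value p s = P.value q s := by
  have : ∀ L, P.IsParsing p s L ↔ P.IsParsing q s L := by
    rintro (_ | ⟨w, L⟩)
    · simp only [isParsing_nil]
    · simp only [isParsing_cons, h]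
  simp only [value, this]

theorem value_nil (p : List α) : P.value p [] = 1 := by
  have : {L | P.IsParsing p [] L} = {[]} := by
    ext L
    refine ⟨fun h => List.length_eq_zero_iff.mp (by simpa using h.length_le), ?_⟩
    rintro rfl
    exact isParsing_nil.mpr rfl
  simp [value, this]

theorem value_of_ne_nil (p : List α) {s : List α} (hs : s ≠ [])
    [DecidablePred fun w => P.CanFollow p w ∧ w <+: s] :
    P.value p s = ∑ w ∈ P.words, if P.CanFollow p w ∧ w <+: s then
      P.coeff w * P.value w (s.drop w.length) else 0 := by
  have hset : {L | P.IsParsing p s L} =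
      ⋃ w ∈ (P.words.filter fun w => P.CanFollow p w ∧ w <+: s : Set (List α)),
        (w :: ·) '' {L | P.IsParsing w (s.drop w.length) L} := by
    ext (_ | ⟨w, L⟩)
    · simp [isParsing_nil, hs]
    · simp [isParsing_cons, and_comm]
  rw [← Finset.sum_filter, value, hset, ← finsum_mem_coe_finset, finsum_mem_biUnion]
  · refine finsum_mem_congr rfl fun w _ => ?_
    rw [finsum_mem_image (List.cons_injective.injOn)]
    simp only [List.map_cons, List.prod_cons, value]
    exact (mul_finsum_mem' _ _ (P.finite_setOf_isParsing _ _)).symm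
  · intro v _ w _ hvw
    refine Set.disjoint_left.mpr ?_
    rintro _ ⟨L, -, rfl⟩ ⟨L', -, h⟩
    exact hvw (List.cons.inj h).1.symm
  · exact Finset.finite_toSet _
  · exact fun w _ => (P.finite_setOf_isParsing _ _).image _

end WordPuzzle

section Core

theorem exists_eq_replicate_append_core (s : PWord) :
    ∃ m n, s = List.replicate m PLetter.X ++ core s ++ List.replicate n PLetter.X := by
  obtain ⟨m, hm⟩ := exists_eq_replicate_append_dropWhile PLetter.X s
  obtain ⟨n, hn⟩ :=
    exists_eq_replicate_append_dropWhile PLetter.X (s.dropWhile (· == PLetter.X)).reverse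
  have hcore : s.dropWhile (· == PLetter.X) = core s ++ List.replicate n PLetter.X := by
    simpa [core] using congrArg List.reverse hn
  exact ⟨m, n, by rw [List.append_assoc, ← hcore, ← hm]⟩

theorem core_replicate_append (n : ℕ) (s : PWord) :
    core (List.replicate n PLetter.X ++ s) = core s := by
  simp [core]

theorem getLast_core_ne_X {s : PWord} (h : core s ≠ []) : (core s).getLast h ≠ PLetter.X :=
  fun hX => List.rdropWhile_last_not (· == PLetter.X) (s.dropWhile (· == PLetter.X)) h
    (beq_iff_eq.mpr hX)

theorem head_core_ne_X {s : PWord} (h : core s ≠ []) : (core s).head h ≠ PLetter.X := by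
  have hpre : core s <+: s.dropWhile (· == PLetter.X) := List.rdropWhile_prefix _ _
  rw [hpre.head h]
  simpa using List.head_dropWhile_not (· == PLetter.X) (hpre.ne_nil h)

theorem core_core (s : PWord) : core (core s) = core s := by
  have hleft : (core s).dropWhile (· == PLetter.X) = core s := by
    refine List.dropWhile_eq_self_iff.mpr fun hpos => ?_
    simpa [List.head_eq_getElem] using head_core_ne_X (List.length_pos_iff.mp hpos)
  have hright : (core s).rdropWhile (· == PLetter.X) = core s :=
    List.rdropWhile_eq_self_iff.mpr fun h => by simpa using getLast_core_ne_X h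
  rw [core, hleft]
  exact hright

end Core

/-- The tight puzzle as a `WordPuzzle`: a word of weight `k` and coefficient `c` gets the
coefficient `c · t ^ k`, where `t` is `Polynomial.X`. -/
@[simps] noncomputable def tightPuzzle : WordPuzzle PLetter (Polynomial ℤ) where
  words := tightWords.toFinset
  nil_notMem := by simp [tightWords]
  CanFollow u v := ¬ Bad u v
  coeff w := Polynomial.C (tightCoeff w) * Polynomial.X ^ wordWt w

theorem parseVal_eq_prod_coeff (L : List PWord) :
    parseVal tightCoeff L = (L.map tightPuzzle.coeff).prod := by
  induction L with
  | nil => simp [parseVal]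
  | cons w L ih =>
    rw [List.map_cons, List.prod_cons, ← ih]
    simp only [parseVal, tightPuzzle_coeff, List.map_cons, List.prod_cons, List.sum_cons, map_mul,
      pow_add]
    ring

section TightPuzzle

open PLetter

/-- The total weight of all parsings of `s` in the tight puzzle.  The empty preceding word stands
for the absence of a constraint on the first word. -/
noncomputable def tightVal (s : PWord) : Polynomial ℤ := tightPuzzle.value [] s

theorem tightVal_nil : tightVal [] = 1 := tightPuzzle.value_nil []

theorem value_eq_tightVal {p : PWord} (hp : p ≠ [X]) (s : PWord) :
    tightPuzzle.value p s = tightVal s :=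
  tightPuzzle.value_congr (by simp [Bad, hp]) s

/-- The total weight of the parsings of what remains of `s` after its prefix `u`, and `0` if `u` is
not a prefix of `s`. -/
noncomputable def tailVal (u s : PWord) : Polynomial ℤ :=
  if u <+: s then tightVal (s.drop u.length) else 0

theorem tailVal_nil_left (s : PWord) : tailVal [] s = tightVal s := by
  simp [tailVal]

theorem tailVal_cons_nil (a : PLetter) (u : PWord) : tailVal (a :: u) [] = 0 := by
  simp [tailVal]

theorem tailVal_cons_cons (a b : PLetter) (u s : PWord) :
    tailVal (a :: u) (b :: s) = if a = b then tailVal u s else 0 := by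
  simp [tailVal, List.cons_prefix_cons, ite_and]

theorem sum_tightPuzzle_words {M : Type*} [AddCommMonoid M] (f : PWord → M) :
    ∑ w ∈ tightPuzzle.words, f w =
      f [X] + f [X, A] + f [X, A, A] + f [A, X, A] + f [A, A, A] + f [B, A] +
        f [A, B, A] + f [X, X, A] := by
  have hnodup : tightWords.Nodup := by simp [tightWords]
  rw [tightPuzzle_words, List.sum_toFinset f hnodup]
  simp [tightWords, add_assoc]

theorem ite_coeff_mul_value {w : PWord} (hw : w ≠ [X]) (p s : PWord) :
    (if tightPuzzle.CanFollow p w ∧ w <+: s then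
      tightPuzzle.coeff w * tightPuzzle.value w (s.drop w.length) else 0) =
    if Bad p w then 0 else Polynomial.X * ((tightCoeff w : Polynomial ℤ) * tailVal w s) := by
  by_cases hbad : Bad p w
  · rw [if_neg fun h => h.1 hbad, if_pos hbad]
  by_cases hpre : w <+: s
  · rw [if_pos ⟨hbad, hpre⟩, if_neg hbad, tailVal, if_pos hpre, value_eq_tightVal hw,
      tightPuzzle_coeff, wordWt, if_neg hw, pow_one, eq_intCast]
    ring
  · rw [if_neg fun h => hpre h.2, if_neg hbad, tailVal, if_neg hpre, mul_zero, mul_zero]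

theorem value_cons (p : PWord) (a : PLetter) (s : PWord) :
    tightPuzzle.value p (a :: s) =
      (if a = X then tightPuzzle.value [X] s else 0) +
      (if p = [X] then 0 else
        Polynomial.X * (tailVal [X, A] (a :: s) - tailVal [B, A] (a :: s))) +
      Polynomial.X * (tailVal [X, A, A] (a :: s) + 2 * tailVal [A, X, A] (a :: s) -
        tailVal [A, A, A] (a :: s) - tailVal [A, B, A] (a :: s) - tailVal [X, X, A] (a :: s)) := by
  have hX : (if tightPuzzle.CanFollow p [X] ∧ [X] <+: a :: s then
      tightPuzzle.coeff [X] * tightPuzzle.value [X] ((a :: s).drop [X].length) else 0) =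
      if a = X then tightPuzzle.value [X] s else 0 := by
    simp [Bad, tightCoeff, wordWt, List.cons_prefix_cons, eq_comm (a := X)]
  rw [tightPuzzle.value_of_ne_nil _ (List.cons_ne_nil a s), sum_tightPuzzle_words, hX]
  simp only [ne_eq, List.cons.injEq, reduceCtorEq, and_false, not_false_eq_true,
    ite_coeff_mul_value]
  have hcoeff : tightCoeff [X, A] = 1 ∧ tightCoeff [X, A, A] = 1 ∧ tightCoeff [A, X, A] = 2 ∧
      tightCoeff [A, A, A] = -1 ∧ tightCoeff [B, A] = -1 ∧ tightCoeff [A, B, A] = -1 ∧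
      tightCoeff [X, X, A] = -1 := by decide
  by_cases hp : p = [X] <;>
    simp only [Bad, hp, hcoeff, List.cons.injEq, reduceCtorEq, List.cons_ne_self, and_self,
      and_true, and_false, or_self, or_true, or_false, ↓reduceIte] <;>
    push_cast <;> ring

theorem value_X (s : PWord) :
    tightPuzzle.value [X] s =
      tightVal s - Polynomial.X * (tailVal [X, A] s - tailVal [B, A] s) := by
  cases s with
  | nil => simp [tailVal_cons_nil, tightVal_nil, tightPuzzle.value_nil]
  | cons a s =>
    rw [tightVal, value_cons, value_cons, if_pos (rfl : [X] = [X]),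
      if_neg (List.cons_ne_nil X []).symm]
    ring

/-- The combination of the remainders of `s` through which the words `AAA`, `AXA`, `ABA` enter the
recursion; its coefficients are the negatives of theirs. -/
noncomputable def pairTailVal (s : PWord) : Polynomial ℤ :=
  tailVal [A, A] s - 2 * tailVal [X, A] s + tailVal [B, A] s

theorem tightVal_cons_A (s : PWord) :
    tightVal (A :: s) = -Polynomial.X * pairTailVal s := by
  simp only [tightVal, value_cons, tailVal_cons_cons, pairTailVal, reduceCtorEq, ↓reduceIte,
    List.ne_cons_self]
  ring

theorem tightVal_cons_B (s : PWord) :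
    tightVal (B :: s) = -Polynomial.X * tailVal [A] s := by
  simp [tightVal, value_cons, tailVal_cons_cons]

theorem tightVal_cons_X (s : PWord) :
    tightVal (X :: s) =
      tightVal s + Polynomial.X * tailVal [A] s + Polynomial.X * pairTailVal s := by
  rw [tightVal, value_cons, if_pos rfl, value_X]
  simp only [tailVal_cons_cons, pairTailVal, reduceCtorEq, ↓reduceIte, List.ne_cons_self]
  ring

/-- The data about `s` on which the recursion in the first letter closes up. -/
noncomputable def stateVec (s : PWord) : Fin 3 → Polynomial ℤ :=
  ![tightVal s, tailVal [A] s, pairTailVal s]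

/-- The matrix by which prepending a letter acts on `stateVec`, the weight variable being `t`. -/
def transferMatrix {R : Type*} [CommRing R] (t : R) : PLetter → Matrix (Fin 3) (Fin 3) R
  | A => !![0, 0, -t; 1, 0, 0; 0, 1, 0]
  | X => !![1, t, t; 0, 0, 0; 0, -2, 0]
  | B => !![0, -t, 0; 0, 0, 0; 0, 1, 0]

/-- The Gram matrix of a symmetric form for which all transfer matrices are self-adjoint.  Its first
row is the functional taking `stateVec s` to the value of `X :: X :: s`. -/
def gramMatrix {R : Type*} [CommRing R] (t : R) : Matrix (Fin 3) (Fin 3) R :=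
  !![1, -t, t; -t, t, -t; t, -t, t ^ 2]

theorem isSymm_gramMatrix {R : Type*} [CommRing R] (t : R) : (gramMatrix t).IsSymm := by
  ext i j
  fin_cases i <;> fin_cases j <;> simp [gramMatrix]

theorem isSelfAdjoint_transferMatrix {R : Type*} [CommRing R] (t : R) (a : PLetter) :
    (gramMatrix t).IsSelfAdjoint (transferMatrix t a) := by
  ext i j
  cases a <;> fin_cases i <;> fin_cases j <;>
    simp [gramMatrix, transferMatrix, Matrix.mul_apply, Fin.sum_univ_three] <;> ring

theorem stateVec_nil : stateVec [] = Pi.single 0 1 := by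
  ext i
  fin_cases i <;> simp [stateVec, tightVal_nil, tailVal_cons_nil, pairTailVal]

open Matrix in
theorem stateVec_cons (a : PLetter) (s : PWord) :
    stateVec (a :: s) = transferMatrix Polynomial.X a *ᵥ stateVec s := by
  ext1 i
  cases a <;> fin_cases i <;>
    simp [stateVec, transferMatrix, Matrix.mulVec, tightVal_cons_A, tightVal_cons_B,
      tightVal_cons_X, tailVal_cons_cons, tailVal_nil_left, pairTailVal, add_assoc]

open Matrix in
theorem stateVec_eq_col_prod (s : PWord) :
    stateVec s = (s.map (transferMatrix Polynomial.X)).prod.col 0 := by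
  rw [← mulVec_single_one]
  induction s with
  | nil => rw [stateVec_nil, List.map_nil, List.prod_nil, one_mulVec]
  | cons a s ih => rw [stateVec_cons, ih, List.map_cons, List.prod_cons, mulVec_mulVec]

/-- The total weight of the parsings of `s` padded on the left by the word `X` and two further
letters `X`.  More padding is redundant, as no word has more than two `X`s before its first other
letter. -/
noncomputable def paddedVal (s : PWord) : Polynomial ℤ := tightPuzzle.value [X] (X :: X :: s)

theorem paddedVal_eq_tightVal (s : PWord) : paddedVal s = tightVal (X :: X :: s) := by
  simp [paddedVal, value_X, tailVal_cons_cons]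

theorem paddedVal_eq_gramMatrix_mul_prod (s : PWord) :
    paddedVal s = (gramMatrix Polynomial.X * (s.map (transferMatrix Polynomial.X)).prod :
      Matrix (Fin 3) (Fin 3) (Polynomial ℤ)) 0 0 := by
  have hstate (i : Fin 3) :
      (s.map (transferMatrix Polynomial.X)).prod i 0 = stateVec s i := by
    rw [stateVec_eq_col_prod, Matrix.col_apply]
  rw [Matrix.mul_apply, Fin.sum_univ_three, hstate, hstate, hstate, paddedVal_eq_tightVal]
  change _ = 1 * tightVal s + -Polynomial.X * tailVal [A] s + Polynomial.X * pairTailVal s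
  rw [tightVal_cons_X, tightVal_cons_X]
  simp only [pairTailVal, tailVal_cons_cons, reduceCtorEq, ↓reduceIte]
  ring

theorem paddedVal_reverse (s : PWord) : paddedVal s.reverse = paddedVal s := by
  rw [paddedVal_eq_gramMatrix_mul_prod, paddedVal_eq_gramMatrix_mul_prod,
    prod_map_reverse_apply_self_eq (isSymm_gramMatrix _) (isSelfAdjoint_transferMatrix _)]

theorem paddedVal_replicate_append (n : ℕ) (s : PWord) :
    paddedVal (List.replicate n X ++ s) = paddedVal s := by
  induction n with
  | zero => rfl
  | succ n ih =>
    rw [← ih, List.replicate_succ, List.cons_append]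
    simp [paddedVal_eq_tightVal, tightVal_cons_X, pairTailVal, tailVal_cons_cons]

theorem paddedVal_append_replicate (n : ℕ) (s : PWord) :
    paddedVal (s ++ List.replicate n X) = paddedVal s := by
  rw [← paddedVal_reverse, List.reverse_append, List.reverse_replicate,
    paddedVal_replicate_append, paddedVal_reverse]

theorem paddedVal_core (s : PWord) : paddedVal (core s) = paddedVal s := by
  obtain ⟨m, n, hs⟩ := exists_eq_replicate_append_core s
  conv_rhs => rw [hs, paddedVal_append_replicate, paddedVal_replicate_append]

theorem length_le_of_mem_tightWords {w : PWord} (hw : w ∈ tightWords) : w.length ≤ 3 := by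
  revert w
  decide

theorem getLast?_of_mem_tightWords {w : PWord} (hw : w ∈ tightWords) (hX : w ≠ [X]) :
    w.getLast? = some A := by
  revert w
  decide

theorem not_prefix_replicate_of_mem_tightWords {w : PWord} (hw : w ∈ tightWords) (hX : w ≠ [X])
    (n : ℕ) : ¬ w <+: List.replicate n X := by
  intro hpre
  have hA : A ∈ w := List.mem_of_getLast? (getLast?_of_mem_tightWords hw hX)
  exact PLetter.noConfusion (List.eq_of_mem_replicate (hpre.subset hA))

theorem core_flatten_ne_nil {L : List PWord} (hmem : ∀ w ∈ L, w ∈ tightWords) (hL : L ≠ [])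
    (hX : L.head hL ≠ [X]) : core L.flatten ≠ [] := by
  intro hnil
  obtain ⟨m, n, hflat⟩ := exists_eq_replicate_append_core L.flatten
  rw [hnil, List.append_nil, List.replicate_append_replicate] at hflat
  exact not_prefix_replicate_of_mem_tightWords (hmem _ (L.head_mem hL)) hX _
    (hflat ▸ head_prefix_flatten hL)

theorem isOpenParsing_iff {W : PWord} {L : List PWord} :
    IsOpenParsing W L ↔ tightPuzzle.IsParsing [X] L.flatten L ∧ core L.flatten = core W ∧
      ∀ h : L ≠ [], L.head h ≠ [X] ∧ L.getLast h ≠ [X] := by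
  cases L with
  | nil =>
    have : TightChain [] := ⟨by simp, .nil⟩
    simp [IsOpenParsing, WordPuzzle.isParsing_nil, this]
  | cons w L =>
    have hfollow : ¬ Bad [X] w ↔ w ≠ [X, A] ∧ w ≠ [B, A] := by simp [Bad]
    have hparse : tightPuzzle.IsParsing [X] (w :: L).flatten (w :: L) ↔
        TightChain (w :: L) ∧ ¬ Bad [X] w := by
      rw [WordPuzzle.IsParsing, List.isChain_cons_cons]
      simp only [tightPuzzle_words, List.mem_toFinset, tightPuzzle_CanFollow, and_true]
      rw [and_comm (a := ¬ Bad [X] w), ← and_assoc]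
      rfl
    rw [hparse, hfollow, IsOpenParsing]
    simp only [List.head_cons, ne_eq, reduceCtorEq, not_false_eq_true, forall_true_left]
    tauto

theorem isParsing_replicate_append_iff (n : ℕ) (s : PWord) (L : List PWord) :
    tightPuzzle.IsParsing [X] (List.replicate n X ++ s) (List.replicate n [X] ++ L) ↔
      tightPuzzle.IsParsing [X] s L := by
  induction n with
  | zero => rfl
  | succ n ih =>
    rw [List.replicate_succ, List.replicate_succ, List.cons_append, List.cons_append,
      WordPuzzle.isParsing_cons, ← ih]
    simp [tightWords, Bad]

theorem getLast?_flatten_of_isOpenParsing {W : PWord} {L : List PWord} (h : IsOpenParsing W L)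
    (hL : L ≠ []) : L.flatten.getLast? = some A := by
  have hlast := getLast?_of_mem_tightWords (h.1.1 _ (L.getLast_mem hL)) (h.2.2 hL).2.2.2
  have hne : L.getLast hL ≠ [] := fun hnil => by simp [hnil] at hlast
  rw [getLast?_flatten_eq_getLast?_getLast hL hne, hlast]

theorem exists_flatten_eq_of_isOpenParsing {W : PWord} {L : List PWord} (h : IsOpenParsing W L) :
    ∃ m ≤ 2, L.flatten = List.replicate m X ++ core W := by
  rcases eq_or_ne L [] with rfl | hL
  · exact ⟨0, by simp, by simpa [core] using h.2.1⟩
  obtain ⟨m, n, hflat⟩ := exists_eq_replicate_append_core L.flatten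
  rw [h.2.1] at hflat
  have hn : n = 0 := by
    by_contra hn
    have hlast := getLast?_flatten_of_isOpenParsing h hL
    simp [hflat, List.getLast?_replicate, hn] at hlast
  rw [hn, List.replicate_zero, List.append_nil] at hflat
  refine ⟨m, ?_, hflat⟩
  have hhead := h.1.1 _ (L.head_mem hL)
  by_contra! hm
  have hlen : (L.head hL).length ≤ (List.replicate m X).length := by
    rw [List.length_replicate]
    exact (length_le_of_mem_tightWords hhead).trans hm
  exact not_prefix_replicate_of_mem_tightWords hhead (h.2.2 hL).1 m
    (List.prefix_of_prefix_length_le (head_prefix_flatten hL) (hflat ▸ List.prefix_append _ _) hlen)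

theorem isOpenParsing_dropWhile {W : PWord} {M : List PWord}
    (hM : tightPuzzle.IsParsing [X] (X :: X :: core W) M) :
    IsOpenParsing W (M.dropWhile (· == [X])) := by
  obtain ⟨k, hk⟩ := exists_eq_replicate_append_dropWhile [X] M
  set L := M.dropWhile (· == [X])
  have hflat : X :: X :: core W = List.replicate k X ++ L.flatten := by
    rw [← hM.2.2, hk]
    simp
  rw [hflat, hk, isParsing_replicate_append_iff] at hM
  have hcore : core L.flatten = core W := by
    rw [← core_replicate_append k, ← hflat]
    exact (core_replicate_append 2 _).trans (core_core W)
  refine isOpenParsing_iff.mpr ⟨hM, hcore, fun hne => ?_⟩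
  have hhead : L.head hne ≠ [X] := by
    simpa using List.head_dropWhile_not (· == [X]) hne
  refine ⟨hhead, fun hlast => ?_⟩
  have hW : core W ≠ [] :=
    hcore ▸ core_flatten_ne_nil (fun w hw => List.mem_toFinset.mp (hM.1 w hw)) hne hhead
  have hX : (X :: X :: core W).getLast? = some X := by
    rw [hflat, List.getLast?_append, getLast?_flatten_eq_getLast?_getLast hne (by simp [hlast]),
      hlast]
    rfl
  refine getLast_core_ne_X hW ?_
  simpa [List.getLast?_cons, List.getLast?_eq_some_getLast hW] using hX

theorem bijOn_dropWhile_isOpenParsing (W : PWord) :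
    Set.BijOn (List.dropWhile (· == [X])) {M | tightPuzzle.IsParsing [X] (X :: X :: core W) M}
      {L | IsOpenParsing W L} := by
  refine ⟨fun M hM => isOpenParsing_dropWhile hM, fun M hM M' hM' hMM' => ?_, fun L hL => ?_⟩
  · obtain ⟨k, hk⟩ := exists_eq_replicate_append_dropWhile [X] M
    obtain ⟨k', hk'⟩ := exists_eq_replicate_append_dropWhile [X] M'
    rw [← hMM'] at hk'
    have hlen : M.flatten.length = M'.flatten.length := by rw [hM.2.2, hM'.2.2]
    rw [hk, hk'] at hlen
    have : k = k' := by simpa using hlen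
    rw [hk, hk', this]
  · obtain ⟨m, hm, hflat⟩ := exists_flatten_eq_of_isOpenParsing hL
    obtain ⟨hparse, -, hends⟩ := isOpenParsing_iff.mp hL
    refine ⟨List.replicate (2 - m) [X] ++ L, ?_, ?_⟩
    · have hpad : X :: X :: core W = List.replicate (2 - m) X ++ L.flatten := by
        rw [hflat, ← List.append_assoc, List.replicate_append_replicate, Nat.sub_add_cancel hm]
        rfl
      rw [Set.mem_ofPred_eq, hpad]
      exact (isParsing_replicate_append_iff _ _ _).mpr hparse
    · rw [List.dropWhile_append_of_pos (by simp), List.dropWhile_eq_self_iff]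
      intro hpos
      simpa [List.head_eq_getElem] using (hends (List.length_pos_iff.mp hpos)).1

theorem finsum_isOpenParsing (W : PWord) :
    ∑ᶠ L ∈ {L | IsOpenParsing W L}, parseVal tightCoeff L = paddedVal W := by
  rw [← paddedVal_core, paddedVal, WordPuzzle.value]
  refine (finsum_mem_eq_of_bijOn _ (bijOn_dropWhile_isOpenParsing W) fun M _ => ?_).symm
  obtain ⟨k, hk⟩ := exists_eq_replicate_append_dropWhile [X] M
  rw [parseVal_eq_prod_coeff]
  conv_lhs => rw [hk]
  simp [tightCoeff, wordWt]

theorem length_lt_of_isOpenParsing {W : PWord} {L : List PWord} (h : IsOpenParsing W L) :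
    L.length < W.length + 3 := by
  obtain ⟨M, hM, rfl⟩ := (bijOn_dropWhile_isOpenParsing W).surjOn h
  obtain ⟨m, n, hW⟩ := exists_eq_replicate_append_core W
  have hcore := congrArg List.length hW
  have hdrop := (List.dropWhile_sublist (· == [X]) (l := M)).length_le
  have hparse := hM.length_le
  simp only [List.length_append, List.length_replicate, List.length_cons] at hcore hparse
  omega

theorem wordOf_injective : Function.Injective wordOf := by
  decide

theorem exists_wordOf_eq {w : PWord} (hw : w ∈ tightWords) : ∃ i, wordOf i = w := by
  revert w
  decide

theorem openVal_eq_finsum (W : PWord) :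
    openVal W = ∑ᶠ L ∈ {L | IsOpenParsing W L}, parseVal tightCoeff L := by
  have hbij : Set.BijOn (List.map wordOf)
      {I | I.length < W.length + 3 ∧ IsOpenParsing W (I.map wordOf)} {L | IsOpenParsing W L} := by
    refine ⟨fun I hI => hI.2, (List.map_injective_iff.mpr wordOf_injective).injOn, fun L hL => ?_⟩
    have hrange : L ∈ Set.range (List.map wordOf) := by
      rw [Set.range_list_map]
      exact fun w hw => exists_wordOf_eq (hL.1.1 w hw)
    obtain ⟨I, rfl⟩ := hrange
    exact ⟨I, ⟨by simpa using length_lt_of_isOpenParsing hL, hL⟩, rfl⟩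
  rw [← finsum_mem_eq_of_bijOn _ hbij fun _ _ => rfl, openVal,
    sum_range_sum_ofFn_eq_finsum_mem fun I : List (Fin 9) =>
      if IsOpenParsing W (I.map wordOf) then parseVal tightCoeff (I.map wordOf) else 0]
  refine finsum_congr fun I => ?_
  by_cases hI : IsOpenParsing W (I.map wordOf) <;> simp [hI]

theorem openVal_eq_paddedVal (W : PWord) : openVal W = paddedVal W :=
  (openVal_eq_finsum W).trans (finsum_isOpenParsing W)

end TightPuzzle

/-- **Open theorem.**  For every finite string `W` over `{A, X, B}`, the open values in
the tight puzzle satisfy `|W| = |W̄|`, where `W̄` is the reversed string. -/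
theorem open_reversal (W : PWord) : openVal W = openVal W.reverse := by
  rw [openVal_eq_paddedVal, openVal_eq_paddedVal, paddedVal_reverse]
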